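/- arXiv:2410.08011 — 2 statements merged into one kernel-verified Lean document; each statement's English description precedes it below -/
import Mathlib

section
/- Let n ≥ 4 and let X ∈ ℂ^n have four equal entries: x_i = x_j = x_k = x_l for some indices 1 ≤ i < j < k < l ≤ n. Then for every σ ∈ S_n, the tableau T(Y) = T_σ(X) has two equal entries in row n−1; that is, there exist 1 ≤ p < q ≤ n−1 with y_{n−1,p} = y_{n−1,q}. (This is the key step showing that if at least 4 entries of λ + ℘ are equal, then the tableau T_σ(σ^{-1}(λ+℘)) is critical for every σ, so λ is not a σ-relation weight for any σ.) -/
/-- The orientation function `A_σ` of the graph `G_σ`: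
`A_σ(r,s) = 1` if `σ⁻¹(r) > σ⁻¹(s)` and `A_σ(r,s) = -1` otherwise. -/
def Aperm (σ : Equiv.Perm ℕ) (r s : ℕ) : ℤ :=
  if σ.symm s < σ.symm r then 1 else -1

/-- The Gelfand–Tsetlin tableau `T_σ(X)`: `tab n σ x k i` is the entry `y_{k,i}` in
row `k`, column `i`; row `n` is `x` and `y_{k-1,i} = y_{k,i} + (1 - A_σ(k,i))/2`. -/
noncomputable def tab (n : ℕ) (σ : Equiv.Perm ℕ) (x : ℕ → ℂ) (k i : ℕ) : ℂ :=
  if h : n ≤ k then x i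
  else tab n σ x (k + 1) i + (1 - (Aperm σ (k + 1) i : ℂ)) / 2
termination_by n - k
decreasing_by omega

/-!
Of four equal entries in row `n`, at least three lie in columns `< n` and so have successors in
row `n - 1`. The increment passing from row `n` to row `n - 1` in column `t` is determined by
`A_σ(n,t)`, which takes only two values; hence two of these three entries get the same increment
and stay equal.
-/

theorem aperm_mem_pair (σ : Equiv.Perm ℕ) (r s : ℕ) : Aperm σ r s ∈ ({1, -1} : Finset ℤ) := by
  unfold Aperm
  split_ifs <;> decide

theorem exists_lt_aperm_eq_of_two_lt_card (σ : Equiv.Perm ℕ) (r : ℕ) {s : Finset ℕ}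
    (hs : 2 < s.card) : ∃ p ∈ s, ∃ q ∈ s, p < q ∧ Aperm σ r p = Aperm σ r q := by
  have hcard : ({1, -1} : Finset ℤ).card < s.card := Finset.card_le_two.trans_lt hs
  obtain ⟨p, hp, q, hq, hne, heq⟩ := Finset.exists_ne_map_eq_of_card_lt_of_maps_to hcard
    fun t _ ↦ aperm_mem_pair σ r t
  rcases hne.lt_or_gt with hlt | hgt
  · exact ⟨p, hp, q, hq, hlt, heq⟩
  · exact ⟨q, hq, p, hp, hgt, heq.symm⟩

section Tableau

variable {n r : ℕ} (σ : Equiv.Perm ℕ) (x : ℕ → ℂ)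

theorem tab_self (i : ℕ) : tab n σ x n i = x i := by
  rw [tab, dif_pos le_rfl]

theorem tab_of_lt (hr : r < n) (i : ℕ) :
    tab n σ x r i = tab n σ x (r + 1) i + (1 - (Aperm σ (r + 1) i : ℂ)) / 2 := by
  rw [tab, dif_neg hr.not_ge]

theorem exists_lt_tab_eq_of_two_lt_card (hr : r < n) {s : Finset ℕ} (hs : 2 < s.card) {c : ℂ}
    (hc : ∀ t ∈ s, tab n σ x (r + 1) t = c) :
    ∃ p ∈ s, ∃ q ∈ s, p < q ∧ tab n σ x r p = tab n σ x r q := by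
  obtain ⟨p, hp, q, hq, hpq, hA⟩ := exists_lt_aperm_eq_of_two_lt_card σ (r + 1) hs
  refine ⟨p, hp, q, hq, hpq, ?_⟩
  rw [tab_of_lt σ x hr, tab_of_lt σ x hr, hc p hp, hc q hq, hA]

end Tableau

theorem stmt17_general (n : ℕ) (x : ℕ → ℂ) {i j k : ℕ} (h1 : 1 ≤ i) (hij : i < j) (hjk : j < k)
    (hk : k < n) (hx1 : x i = x j) (hx2 : x j = x k) (σ : Equiv.Perm ℕ) :
    ∃ p q : ℕ, 1 ≤ p ∧ p < q ∧ q ≤ n - 1 ∧ tab n σ x (n - 1) p = tab n σ x (n - 1) q := by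
  obtain ⟨r, rfl⟩ : ∃ r, n = r + 1 := Nat.exists_eq_add_one.mpr (Nat.zero_lt_of_lt hk)
  have hcard : 2 < ({i, j, k} : Finset ℕ).card :=
    Finset.two_lt_card.mpr
      ⟨i, by simp, j, by simp, k, by simp, hij.ne, (hij.trans hjk).ne, hjk.ne⟩
  have hrow : ∀ t ∈ ({i, j, k} : Finset ℕ), tab (r + 1) σ x (r + 1) t = x k := by
    simp [tab_self, hx1, hx2]
  have hcol : ∀ t ∈ ({i, j, k} : Finset ℕ), 1 ≤ t ∧ t ≤ r := by
    simp only [Finset.mem_insert, Finset.mem_singleton]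
    omega
  obtain ⟨p, hp, q, hq, hpq, heq⟩ :=
    exists_lt_tab_eq_of_two_lt_card σ x r.lt_succ_self hcard hrow
  exact ⟨p, q, (hcol p hp).1, hpq, (hcol q hq).2, heq⟩

/-- if `n ≥ 4` and `X ∈ ℂ^n` has four equal entries, then for every
`σ ∈ S_n` the tableau `T_σ(X)` has two equal entries in row `n - 1`. -/
theorem stmt17 (n : ℕ) (hn : 4 ≤ n) (x : ℕ → ℂ) (i j k l : ℕ)
    (h1 : 1 ≤ i) (hij : i < j) (hjk : j < k) (hkl : k < l) (hl : l ≤ n)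
    (hx1 : x i = x j) (hx2 : x j = x k) (hx3 : x k = x l) :
    ∀ σ : Equiv.Perm ℕ, (∀ m ∉ Set.Icc 1 n, σ m = m) →
      ∃ p q : ℕ, 1 ≤ p ∧ p < q ∧ q ≤ n - 1 ∧
        tab n σ x (n - 1) p = tab n σ x (n - 1) q :=
  fun σ _ ↦ stmt17_general n x h1 hij hjk (hkl.trans_le hl) hx1 hx2 σ
end

section
/- Let τ ∈ S_n, let s_k be a simple transposition (1 ≤ k ≤ n−1), let X ∈ ℂ^n, and set T(R) = T_τ(X) and T(W) = T_{s_k∘τ}(s_k·X). Then for every 1 ≤ j ≤ k−1: w_{k,j} = r_{k,j} + (A_τ(k+1,j) − A_τ(k,j))/2. -/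
/-!
Unrolling the recursion, `y_{k,i} = x_i + ∑_{k < l ≤ n} (1 - A_σ(l,i))/2`. Since
`A_{πσ}(r,s) = A_σ(π⁻¹ r, π⁻¹ s)`, passing to `(πσ, π·X)` with `π i = i` keeps `x_i` and only
replaces each `A_σ(l,i)` by `A_σ(π⁻¹ l,i)`. If `π` is a transposition `(a b)` with `a ≤ k < b`, only
the summand `l = b` changes.
-/

theorem Aperm_mul (π σ : Equiv.Perm ℕ) (r s : ℕ) :
    Aperm (π * σ) r s = Aperm σ (π.symm r) (π.symm s) :=
  rfl

theorem tab_eq_add_sum (n : ℕ) (σ : Equiv.Perm ℕ) (x : ℕ → ℂ) (k i : ℕ) :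
    tab n σ x k i = x i + ∑ l ∈ Finset.Ioc k n, (1 - (Aperm σ l i : ℂ)) / 2 := by
  fun_induction tab n σ x k i with
  | case1 k h => rw [Finset.Ioc_eq_empty_of_le h, Finset.sum_empty, add_zero]
  | case2 k h ih =>
    have hk : k < n := not_le.mp h
    rw [ih, ← Finset.insert_Ioc_add_one_left_eq_Ioc hk, Finset.sum_insert (by simp)]
    ring

theorem tab_mul_of_apply_eq (n : ℕ) (π σ : Equiv.Perm ℕ) (x : ℕ → ℂ) (k : ℕ) {i : ℕ}
    (hi : π i = i) :
    tab n (π * σ) (fun m => x (π.symm m)) k i =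
      tab n σ x k i +
        ∑ l ∈ Finset.Ioc k n, ((Aperm σ l i : ℂ) - (Aperm σ (π.symm l) i : ℂ)) / 2 := by
  have hi' : π.symm i = i := π.symm_apply_eq.mpr hi.symm
  simp only [tab_eq_add_sum, Aperm_mul, hi', add_assoc, ← Finset.sum_add_distrib]
  congr! 2
  ring

theorem stmt18_general (n : ℕ) (τ : Equiv.Perm ℕ) (x : ℕ → ℂ) {a b k j : ℕ}
    (hak : a ≤ k) (hkb : k < b) (hbn : b ≤ n) (hja : j ≠ a) (hjb : j ≠ b) :
    tab n (Equiv.swap a b * τ) (fun m => x (Equiv.swap a b m)) k j =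
      tab n τ x k j + ((Aperm τ b j : ℂ) - (Aperm τ a j : ℂ)) / 2 := by
  have only_b_changes :
      ∑ l ∈ Finset.Ioc k n, ((Aperm τ l j : ℂ) - (Aperm τ (Equiv.swap a b l) j : ℂ)) / 2 =
        ((Aperm τ b j : ℂ) - (Aperm τ a j : ℂ)) / 2 := by
    rw [Finset.sum_eq_single_of_mem b (Finset.mem_Ioc.mpr ⟨hkb, hbn⟩), Equiv.swap_apply_right]
    intro l hl hlb
    have hla : l ≠ a := (hak.trans_lt (Finset.mem_Ioc.mp hl).1).ne'
    rw [Equiv.swap_apply_of_ne_of_ne hla hlb, sub_self, zero_div]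
  rw [← only_b_changes]
  exact tab_mul_of_apply_eq n (Equiv.swap a b) τ x k (Equiv.swap_apply_of_ne_of_ne hja hjb)

/-- with `T(R) = T_τ(X)` and `T(W) = T_{s_k ∘ τ}(s_k · X)`, for every
`1 ≤ j ≤ k - 1` we have `w_{k,j} = r_{k,j} + (A_τ(k+1,j) - A_τ(k,j))/2`. -/
theorem stmt18 (n : ℕ) (hn : 2 ≤ n) (τ : Equiv.Perm ℕ)
    (hτ : ∀ i ∉ Set.Icc 1 n, τ i = i) (k : ℕ) (hk1 : 1 ≤ k) (hk2 : k ≤ n - 1)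
    (x : ℕ → ℂ) :
    ∀ j : ℕ, 1 ≤ j → j ≤ k - 1 →
      tab n (Equiv.swap k (k + 1) * τ) (fun m => x (Equiv.swap k (k + 1) m)) k j =
        tab n τ x k j + ((Aperm τ (k + 1) j : ℂ) - (Aperm τ k j : ℂ)) / 2 := by
  intro j hj1 hjk
  exact stmt18_general n τ x le_rfl k.lt_succ_self (by omega) (by omega) (by omega)
end
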